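/- Let k be an infinite field, d = 2c, and φ a 3×2 matrix of forms of degree c in B = k[x,y] with ht I₂(φ) = 2 and μ(I₁(φ)) ≥ 3 (the entries span a k-space of dimension at least 3). If two of the entries of φ are x^c and y^{c-1}(x+y), then the morphism ℙ¹ → ℙ² given by the signed 2×2 minors of φ is birational onto its image. -/

import Mathlib

open MvPolynomial

/-- The height of an ideal: the infimum of the heights of the primes containing it. -/
noncomputable def idealHeight {R : Type*} [CommRing R] (I : Ideal R) : ℕ∞ :=
  ⨅ (P : PrimeSpectrum R) (_ : I ≤ P.asIdeal), Order.height P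

/-! Dehomogenize `φ` to a matrix over `k[t]`. Its minors are unimodular and parametrize a plane
curve with function field `E ⊆ k(t)`, and birationality says that `E = k(t)`. By Lüroth's theorem
`E` is generated by a single fraction `f = p / q`, which may be taken with `deg q < deg p`; the
minors are then, up to a unit, forms `h₀, h₁, h₂` of one degree `e` in `p` and `q`.

Every syzygy of the forms `hᵢ` becomes a syzygy of the minors on substituting `p` and `q`. The
syzygies of the minors are generated by the two columns of `φ`, hence have degree at least `c`, and
those of degree `c` are the constant combinations of the columns. A dimension count produces enough
syzygies of the `hᵢ` in degree `m = ⌊e / 2⌋` to conclude that `m * deg p = c` and that all entries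
of `φ` are themselves forms of degree `m` in `p` and `q`.

Since the entries span a space of dimension at least `3`, we have `m ≥ 2`. A form of degree `m ≥ 2`
in `p` and `q` can only have degree `1` in `t` if `deg p = 1`; as `y ^ (c - 1) * (x + y)`
dehomogenizes to `t + 1`, this gives `k(f) = k(t)`. -/

open scoped Polynomial Matrix IntermediateField nonZeroDivisors

section Unimodular

variable {ι R : Type*} [Fintype ι] [CommRing R]

/-- A unimodular vector: its entries generate the unit ideal. Over `k[t]` such a vector is a
reduced projective parametrisation. -/
def IsUnimodular (v : ι → R) : Prop :=
  ∃ a, a ⬝ᵥ v = 1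

theorem IsUnimodular.ne_zero [Nontrivial R] {v : ι → R} (hv : IsUnimodular v) : v ≠ 0 := by
  rintro rfl
  obtain ⟨a, ha⟩ := hv
  simp at ha

theorem IsUnimodular.isUnit_of_forall_dvd {v : ι → R} (hv : IsUnimodular v) {d : R}
    (h : ∀ i, d ∣ v i) : IsUnit d := by
  obtain ⟨a, ha⟩ := hv
  exact isUnit_of_dvd_one (ha ▸ Finset.dvd_sum fun i _ => (h i).mul_left _)

theorem IsUnimodular.exists_unit_smul_of_mul_eq_mul {v w : ι → R} (hv : IsUnimodular v)
    (hw : IsUnimodular w) (h : ∀ i j, v i * w j = v j * w i) : ∃ u : Rˣ, w = u • v := by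
  obtain ⟨a, ha⟩ := hv
  have hwv : ∀ j, w j = (a ⬝ᵥ w) * v j := fun j =>
    calc w j = (a ⬝ᵥ v) * w j := by rw [ha, one_mul]
      _ = (a ⬝ᵥ w) * v j := by
        simp only [dotProduct, Finset.sum_mul]
        exact Finset.sum_congr rfl fun i _ => by linear_combination a i * h i j
  obtain ⟨u, hu⟩ := hw.isUnit_of_forall_dvd fun j => ⟨v j, hwv j⟩
  exact ⟨u, funext fun j => by rw [hwv j, ← hu]; rfl⟩

variable [IsDomain R] [IsPrincipalIdealRing R]

theorem exists_isUnimodular_eq_smul {v : ι → R} (hv : v ≠ 0) :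
    ∃ (d : R) (w : ι → R), IsUnimodular w ∧ v = d • w := by
  obtain ⟨d, hd⟩ := IsPrincipalIdealRing.principal (Ideal.span (Set.range v))
  have hdvd : ∀ i, d ∣ v i := fun i => by
    rw [← Ideal.mem_span_singleton, Ideal.span, ← hd]
    exact Ideal.subset_span ⟨i, rfl⟩
  choose w hw using hdvd
  obtain ⟨a, ha⟩ : ∃ a : ι → R, ∑ i, a i * v i = d := by
    rw [← Ideal.mem_span_range_iff_exists_fun, hd]
    exact Submodule.mem_span_singleton_self d
  have hd0 : d ≠ 0 := by
    rintro rfl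
    exact hv (funext fun i => by simp [hw i])
  refine ⟨d, w, ⟨a, mul_left_cancel₀ hd0 ?_⟩, funext hw⟩
  rw [mul_one, dotProduct, Finset.mul_sum]
  exact (Finset.sum_congr rfl fun i _ => by rw [hw i]; ring).trans ha

theorem exists_isUnimodular_eq_mul_algebraMap {K : Type*} [Field K] [Algebra R K]
    [IsFractionRing R K] {v : ι → K} (hv : v ≠ 0) :
    ∃ (γ : K) (h : ι → R), IsUnimodular h ∧ ∀ i, v i = γ * algebraMap R K (h i) := by
  obtain ⟨b, hb⟩ := IsLocalization.exist_integer_multiples_of_finite R⁰ v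
  choose w hw using hb
  have hb0 : algebraMap R K b ≠ 0 := IsFractionRing.to_map_ne_zero_of_mem_nonZeroDivisors b.2
  have hvw : ∀ i, v i = (algebraMap R K b)⁻¹ * algebraMap R K (w i) := fun i => by
    rw [hw, Algebra.smul_def, inv_mul_cancel_left₀ hb0]
  obtain ⟨d, h, hh, rfl⟩ := exists_isUnimodular_eq_smul (v := w) fun h0 =>
    hv (funext fun i => by simp [hvw, h0])
  exact ⟨(algebraMap R K b)⁻¹ * algebraMap R K d, h, hh, fun i => by
    rw [hvw, Pi.smul_apply, smul_eq_mul, map_mul, mul_assoc]⟩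

end Unimodular

section CrossProduct

variable {R : Type*} [CommRing R]

/-- The signed maximal minors of a `3 × 2` matrix, as the cross product of its columns. -/
def minors (M : Matrix (Fin 3) (Fin 2) R) : Fin 3 → R :=
  M.col 0 ⨯₃ M.col 1

theorem minors_map {S : Type*} [CommRing S] (f : R →+* S) (M : Matrix (Fin 3) (Fin 2) R)
    (i : Fin 3) : minors (M.map f) i = f (minors M i) := by
  fin_cases i <;> simp [minors, cross_apply]

theorem exists_eq_smul_add_smul_of_dotProduct_cross_eq_zero {s u v : Fin 3 → R}
    (h : IsUnimodular (u ⨯₃ v)) (hs : s ⬝ᵥ u ⨯₃ v = 0) : ∃ α β : R, s = α • u + β • v := by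
  obtain ⟨a, ha⟩ := h
  refine ⟨a ⬝ᵥ s ⨯₃ v, a ⬝ᵥ u ⨯₃ s, ?_⟩
  simp only [cross_apply, Matrix.vec3_dotProduct, Matrix.cons_val] at ha hs ⊢
  funext i
  fin_cases i <;> simp only [Pi.add_apply, Pi.smul_apply, smul_eq_mul,
    Fin.zero_eta, Fin.mk_one, Fin.reduceFinMk]
  · linear_combination a 0 * hs - s 0 * ha
  · linear_combination a 1 * hs - s 1 * ha
  · linear_combination a 2 * hs - s 2 * ha

theorem natDegree_cross_le {u v : Fin 3 → R[X]} {m n : ℕ} (hu : ∀ i, (u i).natDegree ≤ m)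
    (hv : ∀ i, (v i).natDegree ≤ n) (i : Fin 3) : ((u ⨯₃ v) i).natDegree ≤ m + n := by
  have h : ∀ i j, (u i * v j).natDegree ≤ m + n := fun i j =>
    Polynomial.natDegree_mul_le_of_le (hu i) (hv j)
  rw [cross_apply]
  fin_cases i <;> exact Polynomial.natDegree_sub_le_of_le (h _ _) (h _ _) |>.trans (max_self _).le

theorem natDegree_minors_le {M : Matrix (Fin 3) (Fin 2) R[X]} {c : ℕ}
    (hM : ∀ i j, (M i j).natDegree ≤ c) (i : Fin 3) : (minors M i).natDegree ≤ 2 * c :=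
  (natDegree_cross_le (fun i => hM i 0) (fun i => hM i 1) i).trans_eq (two_mul c).symm

end CrossProduct

section Syzygies

theorem mem_degreeLT_succ {R : Type*} [Semiring R] {n : ℕ} {p : R[X]} :
    p ∈ Polynomial.degreeLT R (n + 1) ↔ p.natDegree ≤ n := by
  rw [Polynomial.degreeLT_succ_eq_degreeLE, Polynomial.mem_degreeLE,
    Polynomial.natDegree_le_iff_degree_le]

theorem finrank_degreeLT (R : Type*) [Ring R] [StrongRankCondition R] (n : ℕ) :
    Module.finrank R (Polynomial.degreeLT R n) = n := by
  rw [(Polynomial.degreeLTEquiv R n).finrank_eq, Module.finrank_fin_fun]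

variable {k : Type*} [Field k]

theorem exists_natDegree_add_le_of_dotProduct_cross_eq_zero {s u v : Fin 3 → k[X]} {c n : ℕ}
    {i : Fin 3} (hu : ∀ i, (u i).natDegree ≤ c) (hv : ∀ i, (v i).natDegree ≤ c)
    (huv : IsUnimodular (u ⨯₃ v)) (hi : ((u ⨯₃ v) i).coeff (2 * c) ≠ 0)
    (hsn : ∀ i, (s i).natDegree ≤ n) (hs : s ⬝ᵥ u ⨯₃ v = 0) :
    ∃ α β : k[X], s = α • u + β • v ∧ (α ≠ 0 → α.natDegree + c ≤ n) ∧
      (β ≠ 0 → β.natDegree + c ≤ n) := by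
  obtain ⟨α, β, rfl⟩ := exists_eq_smul_add_smul_of_dotProduct_cross_eq_zero huv hs
  have hdeg := Polynomial.le_natDegree_of_ne_zero hi
  have hne : (u ⨯₃ v) i ≠ 0 := fun h => hi (by rw [h, Polynomial.coeff_zero])
  refine ⟨α, β, rfl, fun hα => ?_, fun hβ => ?_⟩
  · have h := natDegree_cross_le hsn hv i
    simp only [map_add, map_smul, LinearMap.add_apply, LinearMap.smul_apply, cross_self, smul_zero,
      add_zero, Pi.smul_apply, smul_eq_mul, Polynomial.natDegree_mul hα hne] at h
    omega
  · have h := natDegree_cross_le hu hsn i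
    simp only [map_add, map_smul, cross_self, smul_zero, zero_add, Pi.smul_apply, smul_eq_mul,
      Polynomial.natDegree_mul hβ hne] at h
    omega

variable {M : Matrix (Fin 3) (Fin 2) k[X]} {c n : ℕ} {i : Fin 3} {s : Fin 3 → k[X]}

theorem le_of_dotProduct_minors_eq_zero (hM : ∀ i j, (M i j).natDegree ≤ c)
    (hu : IsUnimodular (minors M)) (hi : (minors M i).coeff (2 * c) ≠ 0)
    (hsn : ∀ i, (s i).natDegree ≤ n) (hs : s ⬝ᵥ minors M = 0) (hs0 : s ≠ 0) : c ≤ n := by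
  obtain ⟨α, β, rfl, hα, hβ⟩ := exists_natDegree_add_le_of_dotProduct_cross_eq_zero
    (fun i => hM i 0) (fun i => hM i 1) hu hi hsn hs
  rcases ne_or_eq α 0 with h | rfl
  · exact le_of_add_le_right (hα h)
  · exact le_of_add_le_right (hβ fun h => hs0 (by simp [h]))

theorem mem_span_col_of_dotProduct_minors_eq_zero (hM : ∀ i j, (M i j).natDegree ≤ c)
    (hu : IsUnimodular (minors M)) (hi : (minors M i).coeff (2 * c) ≠ 0)
    (hsc : ∀ i, (s i).natDegree ≤ c) (hs : s ⬝ᵥ minors M = 0) :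
    s ∈ Submodule.span k {M.col 0, M.col 1} := by
  obtain ⟨α, β, rfl, hα, hβ⟩ := exists_natDegree_add_le_of_dotProduct_cross_eq_zero
    (fun i => hM i 0) (fun i => hM i 1) hu hi hsc hs
  have hconst : ∀ p : k[X], (p ≠ 0 → p.natDegree + c ≤ c) → ∃ a : k, p = Polynomial.C a :=
    fun p hp => by
      rcases eq_or_ne p 0 with rfl | h
      · exact ⟨0, Polynomial.C_0.symm⟩
      · exact ⟨_, Polynomial.eq_C_of_natDegree_eq_zero (by have := hp h; omega)⟩
  obtain ⟨a, rfl⟩ := hconst α hα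
  obtain ⟨b, rfl⟩ := hconst β hβ
  exact Submodule.mem_span_pair.mpr ⟨a, b, by ext1 i; simp [Polynomial.smul_eq_C_mul]⟩

variable {ι : Type*} [Fintype ι]

/-- The syzygies of degree at most `n` of a vector of polynomials, as a space of vectors with
entries in `degreeLT k (n + 1)`. -/
noncomputable def syzygies (h : ι → k[X]) (n : ℕ) :
    Submodule k (ι → Polynomial.degreeLT k (n + 1)) :=
  LinearMap.ker
    ((dotProductBilin k k).flip h ∘ₗ (Polynomial.degreeLT k (n + 1)).subtype.compLeft ι)

theorem mem_syzygies {h : ι → k[X]} {t : ι → Polynomial.degreeLT k (n + 1)} :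
    t ∈ syzygies h n ↔ (fun i => (t i : k[X])) ⬝ᵥ h = 0 :=
  Iff.rfl

theorem card_mul_le_finrank_syzygies_add {h : ι → k[X]} {e : ℕ} (he : ∀ i, (h i).natDegree ≤ e)
    (n : ℕ) :
    Fintype.card ι * (n + 1) ≤ Module.finrank k (syzygies h n) + (n + e + 1) := by
  have : ∀ n, Module.Finite k (Polynomial.degreeLT k n) := fun n =>
    Module.Finite.equiv (Polynomial.degreeLTEquiv k n).symm
  set T := (dotProductBilin k k).flip h ∘ₗ (Polynomial.degreeLT k (n + 1)).subtype.compLeft ι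
  have hrange : LinearMap.range T ≤ Polynomial.degreeLT k (n + e + 1) := by
    rintro _ ⟨t, rfl⟩
    exact mem_degreeLT_succ.mpr <| Polynomial.natDegree_sum_le_of_forall_le _ _ fun i _ =>
      Polynomial.natDegree_mul_le_of_le (mem_degreeLT_succ.mp (t i).2) (he i)
  calc Fintype.card ι * (n + 1)
      = Module.finrank k (LinearMap.ker T) + Module.finrank k (LinearMap.range T) := by
        rw [add_comm (Module.finrank k _), T.finrank_range_add_finrank_ker,
          Module.finrank_pi_fintype]
        simp only [finrank_degreeLT, Finset.sum_const, Finset.card_univ, smul_eq_mul]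
    _ ≤ Module.finrank k (syzygies h n) + (n + e + 1) :=
        add_le_add le_rfl <|
          (Submodule.finrank_mono hrange).trans_eq (finrank_degreeLT k _)

end Syzygies

section AevalHomogenize

variable {R S T : Type*} [CommRing R] [CommRing S] [CommRing T] [Algebra R S] [Algebra R T]

/-- The value at `(x, y)` of the binary form `∑ j, P_j X^j Y^(m - j)` of degree `m` with
dehomogenization `P`. For a rational function `x / y` it is the numerator of `P(x / y)` over the
common denominator `y ^ m`. Coefficients of `P` beyond `m` are dropped. -/
noncomputable def aevalHomogenize (x y : S) (m : ℕ) : R[X] →ₗ[R] S :=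
  (aeval ![x, y]).toLinearMap ∘ₗ Polynomial.homogenizeLM m

variable {x y : S} {m n : ℕ} {P Q : R[X]}

theorem aevalHomogenize_apply :
    aevalHomogenize x y m P =
      ∑ j ∈ Finset.range (m + 1), algebraMap R S (P.coeff j) * (x ^ j * y ^ (m - j)) := by
  simp only [aevalHomogenize, LinearMap.comp_apply, AlgHom.toLinearMap_apply,
    Polynomial.homogenizeLM_apply, Polynomial.homogenize,
    Finset.Nat.sum_antidiagonal_eq_sum_range_succ_mk, map_sum]
  refine Finset.sum_congr rfl fun j _ => ?_
  rw [aeval_monomial, Finsupp.prod_fintype _ _ (by simp)]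
  simp

theorem aevalHomogenize_one : aevalHomogenize x y m (1 : R[X]) = y ^ m := by
  simp [aevalHomogenize]

theorem aevalHomogenize_mul (hP : P.natDegree ≤ m) (hQ : Q.natDegree ≤ n) :
    aevalHomogenize x y (m + n) (P * Q) =
      aevalHomogenize x y m P * aevalHomogenize x y n Q := by
  simp [aevalHomogenize, Polynomial.homogenize_mul P Q hP hQ]

theorem dotProduct_aevalHomogenize {ι : Type*} [Fintype ι] {v w : ι → R[X]}
    (hv : ∀ i, (v i).natDegree ≤ m) (hw : ∀ i, (w i).natDegree ≤ n) :
    (fun i => aevalHomogenize x y m (v i)) ⬝ᵥ (fun i => aevalHomogenize x y n (w i)) =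
      aevalHomogenize x y (m + n) (v ⬝ᵥ w) := by
  simp only [dotProduct, map_sum, aevalHomogenize_mul (hv _) (hw _)]

theorem aevalHomogenize_succ :
    aevalHomogenize x y (m + 1) P =
      algebraMap R S (P.coeff (m + 1)) * x ^ (m + 1) + y * aevalHomogenize x y m P := by
  simp only [aevalHomogenize_apply, Finset.sum_range_succ _ (m + 1), Finset.mul_sum, Nat.sub_self,
    pow_zero, mul_one, add_comm (algebraMap R S _ * _)]
  congr 1
  refine Finset.sum_congr rfl fun j hj => ?_
  rw [Nat.succ_sub (Finset.mem_range_succ_iff.mp hj), pow_succ]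
  ring

theorem map_aevalHomogenize (f : S →ₐ[R] T) :
    f (aevalHomogenize x y m P) = aevalHomogenize (f x) (f y) m P := by
  simp [aevalHomogenize_apply]

theorem aevalHomogenize_eq_pow_mul_aeval_div {L : Type*} [Field L] [Algebra R L] {x y : L}
    (hy : y ≠ 0) (hP : P.natDegree ≤ m) :
    aevalHomogenize x y m P = y ^ m * Polynomial.aeval (x / y) P := by
  rw [aevalHomogenize_apply, Polynomial.aeval_eq_sum_range' (Nat.lt_succ_iff.mpr hP),
    Finset.mul_sum]
  refine Finset.sum_congr rfl fun j hj => ?_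
  rw [Algebra.smul_def, div_pow, ← pow_mul_pow_sub y (Finset.mem_range_succ_iff.mp hj)]
  field_simp

theorem isCoprime_aevalHomogenize (hxy : IsCoprime x y) (hP : IsUnit (P.coeff m)) :
    IsCoprime (aevalHomogenize x y m P) y := by
  have hlead : IsCoprime (algebraMap R S (P.coeff m) * x ^ m) y :=
    (isCoprime_mul_unit_left_left (hP.map _) _ _).mpr hxy.pow_left
  cases m with
  | zero => simpa [aevalHomogenize_apply] using hlead
  | succ m =>
    rw [aevalHomogenize_succ]
    exact hlead.add_mul_left_left _

theorem isUnimodular_aevalHomogenize {ι : Type*} [Fintype ι] {h : ι → R[X]} {e : ℕ} {i₀ : ι}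
    (hh : IsUnimodular h) (he : ∀ i, (h i).natDegree ≤ e) (hi₀ : IsUnit ((h i₀).coeff e))
    (hxy : IsCoprime x y) : IsUnimodular fun i => aevalHomogenize x y e (h i) := by
  set w : ι → S := fun i => aevalHomogenize x y e (h i)
  obtain ⟨b, hb⟩ := hh
  obtain ⟨N, hN⟩ : ∃ N, ∀ i, (b i).natDegree ≤ N :=
    ⟨Finset.univ.sup fun i => (b i).natDegree, fun i =>
      Finset.le_sup (f := fun i => (b i).natDegree) (Finset.mem_univ i)⟩
  have hpow : (fun i => aevalHomogenize x y N (b i)) ⬝ᵥ w = y ^ (N + e) := by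
    rw [dotProduct_aevalHomogenize hN he, hb, aevalHomogenize_one]
  obtain ⟨α, β, hαβ⟩ := (isCoprime_aevalHomogenize hxy hi₀).pow_right (n := N + e)
  classical
  refine ⟨Pi.single i₀ α + β • fun i => aevalHomogenize x y N (b i), ?_⟩
  rw [add_dotProduct, single_dotProduct, smul_dotProduct, hpow]
  exact hαβ

theorem natDegree_aevalHomogenize_le {p q : R[X]} (hqp : q.natDegree ≤ p.natDegree) :
    (aevalHomogenize p q m P).natDegree ≤ m * p.natDegree :=
  aeval_natDegree_le _ (Polynomial.isHomogeneous_homogenize P).totalDegree_le _ fun i => by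
    fin_cases i
    · exact le_rfl
    · exact hqp

section Degree

variable {k : Type*} [Field k] {p q P : k[X]} {m : ℕ}

theorem degree_aevalHomogenize_natDegree (hqp : q.natDegree < p.natDegree) (hP : P ≠ 0) :
    (aevalHomogenize p q P.natDegree P).degree = ↑(P.natDegree * p.natDegree) := by
  have hp : p ≠ 0 := Polynomial.ne_zero_of_natDegree_gt hqp
  have hlead : (algebraMap k k[X] P.leadingCoeff * p ^ P.natDegree).degree =
      ↑(P.natDegree * p.natDegree) := by
    rw [Polynomial.algebraMap_eq, Polynomial.degree_C_mul (Polynomial.leadingCoeff_ne_zero.mpr hP),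
      Polynomial.degree_pow, Polynomial.degree_eq_natDegree hp]
    simp
  rw [Polynomial.leadingCoeff] at hlead
  rcases h : P.natDegree with _ | D <;> rw [h] at hlead
  · simpa [aevalHomogenize_apply] using hlead
  rw [aevalHomogenize_succ, Polynomial.degree_add_eq_left_of_degree_lt, hlead]
  rw [hlead]
  refine (Polynomial.degree_le_natDegree).trans_lt (Nat.cast_lt.mpr ?_)
  have := natDegree_aevalHomogenize_le (P := P) (m := D) hqp.le
  exact Polynomial.natDegree_mul_le.trans_lt (by rw [add_mul]; omega)

theorem degree_aevalHomogenize (hqp : q.natDegree < p.natDegree) (hq : q ≠ 0) (hP : P ≠ 0)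
    (hPm : P.natDegree ≤ m) :
    (aevalHomogenize p q m P).degree =
      ↑(P.natDegree * p.natDegree + (m - P.natDegree) * q.natDegree) := by
  obtain ⟨n, rfl⟩ := Nat.exists_eq_add_of_le hPm
  have hmul :
      aevalHomogenize p q (P.natDegree + n) P = aevalHomogenize p q P.natDegree P * q ^ n := by
    rw [← aevalHomogenize_one (R := k) (x := p), ← aevalHomogenize_mul le_rfl (by simp), mul_one]
  rw [hmul, Polynomial.degree_mul, degree_aevalHomogenize_natDegree hqp hP, Polynomial.degree_pow,
    Polynomial.degree_eq_natDegree hq, Nat.add_sub_cancel_left]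
  simp

end Degree

end AevalHomogenize

section RatioField

variable {ι k L : Type*} [Field k] [Field L] [Algebra k L]

variable (k) in
/-- The field generated by the ratios of the entries of a vector, that is, the function field of
the image of the rational map to projective space with these coordinates. -/
def ratioField (v : ι → L) : IntermediateField k L :=
  IntermediateField.adjoin k (Set.range fun p : ι × ι => v p.1 / v p.2)

theorem div_mem_ratioField (v : ι → L) (i j : ι) : v i / v j ∈ ratioField k v :=
  IntermediateField.subset_adjoin _ _ ⟨(i, j), rfl⟩

variable [Fintype ι]

theorem ratioField_algebraMap_ne_bot {g : ι → k[X]} (hg : IsUnimodular g) {i₀ : ι}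
    (hi₀ : 0 < (g i₀).natDegree) :
    ratioField k (fun i => algebraMap k[X] (RatFunc k) (g i)) ≠ ⊥ := by
  intro hbot
  have hg₀ : algebraMap k[X] (RatFunc k) (g i₀) ≠ 0 :=
    RatFunc.algebraMap_ne_zero (Polynomial.ne_zero_of_natDegree_gt hi₀)
  have hdvd : ∀ i, g i₀ ∣ g i := fun i => by
    obtain ⟨a, ha⟩ := IntermediateField.mem_bot.mp (hbot ▸ div_mem_ratioField _ i i₀)
    refine ⟨Polynomial.C a, RatFunc.algebraMap_injective k ?_⟩
    rw [map_mul, mul_comm, ← div_eq_iff hg₀, ← ha]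
    rfl
  exact hi₀.ne' (Polynomial.natDegree_eq_zero_of_isUnit (hg.isUnit_of_forall_dvd hdvd))

theorem exists_isUnimodular_eq_mul_aeval {f : L} (hf : Transcendental k f) {v : ι → L}
    (hv : v ≠ 0) (hle : ratioField k v ≤ k⟮f⟯) :
    ∃ (γ : L) (h : ι → k[X]), IsUnimodular h ∧ ∀ i, v i = γ * Polynomial.aeval f (h i) := by
  obtain ⟨j, hj⟩ := Function.ne_iff.mp hv
  let σ : RatFunc k ≃ₐ[k] k⟮f⟯ := RatFunc.algEquivOfTranscendental f hf
  let w : ι → k⟮f⟯ := fun i => ⟨v i / v j, hle (div_mem_ratioField v i j)⟩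
  have hw : (fun i => σ.symm (w i)) ≠ 0 := fun h0 => by
    have h1 : w j = 0 := (map_eq_zero_iff _ σ.symm.injective).mp (congrFun h0 j)
    exact one_ne_zero ((div_self hj).symm.trans (congrArg Subtype.val h1))
  obtain ⟨γ, h, hh, hγ⟩ := exists_isUnimodular_eq_mul_algebraMap (R := k[X]) hw
  refine ⟨σ γ * v j, h, hh, fun i => ?_⟩
  have hwi : w i = σ γ * Polynomial.aeval (IntermediateField.AdjoinSimple.gen k f) (h i) := by
    rw [← RatFunc.algEquivOfTranscendental_algebraMap f hf, ← map_mul, ← hγ, σ.apply_symm_apply]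
  have hvi : v i / v j = σ γ * Polynomial.aeval f (h i) := by
    simpa using congrArg (algebraMap k⟮f⟯ L) hwi
  rw [div_eq_iff hj] at hvi
  rw [hvi]
  ring

end RatioField

section Luroth

variable {k : Type*} [Field k]

theorem exists_intDegree_sub_C_neg {f : RatFunc k} (hf : ¬∃ a, f = RatFunc.C a)
    (hdeg : f.intDegree ≤ 0) : ∃ a, (f - RatFunc.C a).intDegree < 0 := by
  let q := f.denom
  let a := f.num.coeff q.natDegree / q.leadingCoeff
  obtain ⟨p, hp⟩ : ∃ p, p = f.num - Polynomial.C a * q := ⟨_, rfl⟩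
  have hfp : f - RatFunc.C a = algebraMap k[X] (RatFunc k) p / algebraMap k[X] (RatFunc k) q := by
    rw [eq_div_iff (RatFunc.algebraMap_ne_zero f.denom_ne_zero), sub_mul, hp, map_sub, map_mul,
      RatFunc.algebraMap_C, ← div_mul_cancel₀ (algebraMap k[X] (RatFunc k) f.num)
        (RatFunc.algebraMap_ne_zero f.denom_ne_zero), f.num_div_denom]
  have hp0 : p ≠ 0 := fun h => hf ⟨a, sub_eq_zero.mp (by rw [hfp, h, map_zero, zero_div])⟩
  have hcoeff : p.coeff q.natDegree = 0 := by
    rw [hp, Polynomial.coeff_sub, Polynomial.coeff_C_mul, Polynomial.coeff_natDegree,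
      div_mul_cancel₀ _ (Polynomial.leadingCoeff_ne_zero.mpr f.denom_ne_zero), sub_self]
  have hle : p.natDegree ≤ q.natDegree := by
    have hnum : f.num.natDegree ≤ q.natDegree := by
      rwa [RatFunc.intDegree, sub_nonpos, Nat.cast_le] at hdeg
    rw [hp]
    exact (Polynomial.natDegree_sub_le_of_le hnum (Polynomial.natDegree_C_mul_le _ _)).trans
      (max_self _).le
  have hlt : p.natDegree < q.natDegree := lt_of_le_of_ne hle fun h =>
    hp0 (Polynomial.leadingCoeff_eq_zero.mp (by rw [Polynomial.leadingCoeff, h, hcoeff]))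
  refine ⟨a, ?_⟩
  rw [hfp, div_eq_mul_inv, RatFunc.intDegree_mul (RatFunc.algebraMap_ne_zero hp0)
    (inv_ne_zero (RatFunc.algebraMap_ne_zero f.denom_ne_zero)), RatFunc.intDegree_inv,
    RatFunc.intDegree_polynomial, RatFunc.intDegree_polynomial, ← sub_eq_add_neg, sub_neg]
  exact Nat.cast_lt.mpr hlt

theorem adjoin_inv_sub_C (f : RatFunc k) (a : k) : k⟮(f - RatFunc.C a)⁻¹⟯ = k⟮f⟯ := by
  have hC : ∀ E : IntermediateField k (RatFunc k), RatFunc.C a ∈ E := fun E => E.algebraMap_mem a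
  refine le_antisymm ?_ ?_ <;> rw [IntermediateField.adjoin_simple_le_iff]
  · exact inv_mem (sub_mem (IntermediateField.mem_adjoin_simple_self k f) (hC _))
  · simpa using
      add_mem (inv_mem (IntermediateField.mem_adjoin_simple_self k (f - RatFunc.C a)⁻¹)) (hC _)

-- The normalisation moves a pole of the generator given by Lüroth's theorem to infinity.
theorem exists_eq_adjoin_natDegree_denom_lt {E : IntermediateField k (RatFunc k)} (hE : E ≠ ⊥) :
    ∃ f : RatFunc k, E = k⟮f⟯ ∧ f.denom.natDegree < f.num.natDegree := by
  obtain ⟨f, rfl, hf⟩ : ∃ f : RatFunc k, E = k⟮f⟯ ∧ ¬∃ a, f = RatFunc.C a :=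
    ⟨_, RatFunc.Luroth.eq_adjoin_generator, RatFunc.Luroth.generator_ne_C hE⟩
  rcases lt_or_ge 0 f.intDegree with hpos | hle
  · refine ⟨f, rfl, ?_⟩
    rw [RatFunc.intDegree] at hpos
    omega
  · obtain ⟨a, ha⟩ := exists_intDegree_sub_C_neg hf hle
    refine ⟨(f - RatFunc.C a)⁻¹, (adjoin_inv_sub_C f a).symm, ?_⟩
    rw [← neg_pos, ← RatFunc.intDegree_inv, RatFunc.intDegree] at ha
    omega

theorem transcendental_of_natDegree_denom_lt {f : RatFunc k}
    (hf : f.denom.natDegree < f.num.natDegree) : Transcendental k f := by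
  refine f.transcendental_of_ne_C ?_
  rintro ⟨a, rfl⟩
  simp at hf

theorem exists_aevalHomogenize_eq_unit_mul {ι : Type*} [Fintype ι] {g : ι → k[X]}
    (hg : IsUnimodular g) {f : RatFunc k} (hf : Transcendental k f)
    (hle : ratioField k (fun i => algebraMap k[X] (RatFunc k) (g i)) ≤ k⟮f⟯) :
    ∃ (h : ι → k[X]) (i₀ : ι) (u : k[X]ˣ), h i₀ ≠ 0 ∧
      (∀ i, (h i).natDegree ≤ (h i₀).natDegree) ∧
      ∀ i, aevalHomogenize f.num f.denom (h i₀).natDegree (h i) = u * g i := by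
  have hg0 : (fun i => algebraMap k[X] (RatFunc k) (g i)) ≠ 0 := fun h =>
    hg.ne_zero (funext fun i =>
      RatFunc.algebraMap_injective k ((congrFun h i).trans (map_zero _).symm))
  obtain ⟨γ, h, hh, hγ⟩ := exists_isUnimodular_eq_mul_aeval hf hg0 hle
  obtain ⟨j, hj⟩ := Function.ne_iff.mp hh.ne_zero
  have : Nonempty ι := ⟨j⟩
  obtain ⟨i₀, hi₀⟩ := Finite.exists_max fun i => (h i).degree
  have hne : h i₀ ≠ 0 := fun h0 => hj (by
    have := hi₀ j
    simpa [h0] using this)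
  have hdeg : ∀ i, (h i).natDegree ≤ (h i₀).natDegree := fun i =>
    Polynomial.natDegree_le_natDegree (hi₀ i)
  have hw := isUnimodular_aevalHomogenize hh hdeg
    (IsUnit.mk0 _ (Polynomial.leadingCoeff_ne_zero.mpr hne)) f.isCoprime_num_denom
  have hmap : ∀ i, algebraMap k[X] (RatFunc k)
      (aevalHomogenize f.num f.denom (h i₀).natDegree (h i)) =
        algebraMap k[X] (RatFunc k) f.denom ^ (h i₀).natDegree * Polynomial.aeval f (h i) := by
    intro i
    refine (map_aevalHomogenize (IsScalarTower.toAlgHom k k[X] (RatFunc k))).trans ?_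
    rw [IsScalarTower.coe_toAlgHom', aevalHomogenize_eq_pow_mul_aeval_div
      (RatFunc.algebraMap_ne_zero f.denom_ne_zero) (hdeg i), f.num_div_denom]
  obtain ⟨u, hu⟩ := hg.exists_unit_smul_of_mul_eq_mul hw fun i j =>
    RatFunc.algebraMap_injective k (by rw [map_mul, map_mul, hmap, hmap, hγ, hγ]; ring)
  exact ⟨h, i₀, u, hne, hdeg, fun i => congrFun hu i⟩

end Luroth

section Composite

variable {k : Type*} [Field k] {p q : k[X]} {m n : ℕ}

theorem aevalHomogenize_ne_zero (hqp : q.natDegree < p.natDegree) (hq : q ≠ 0) {P : k[X]}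
    (hP : P ≠ 0) (hPm : P.natDegree ≤ m) : aevalHomogenize p q m P ≠ 0 := by
  rw [← Polynomial.degree_ne_bot, degree_aevalHomogenize hqp hq hP hPm]
  exact WithBot.coe_ne_bot

theorem injective_compLeft_aevalHomogenize (ι : Type*) (hqp : q.natDegree < p.natDegree)
    (hq : q ≠ 0) (m : ℕ) :
    Function.Injective
      ((aevalHomogenize p q m ∘ₗ (Polynomial.degreeLT k (m + 1)).subtype).compLeft ι) := by
  have hinj : Function.Injective
      (aevalHomogenize p q m ∘ₗ (Polynomial.degreeLT k (m + 1)).subtype) := by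
    rw [← LinearMap.ker_eq_bot, LinearMap.ker_eq_bot']
    intro P hP
    by_contra hne
    exact aevalHomogenize_ne_zero hqp hq (fun h => hne (Subtype.ext h))
      (mem_degreeLT_succ.mp P.2) hP
  exact hinj.comp_left

theorem dotProduct_eq_zero_of_mem_syzygies {ι : Type*} [Fintype ι] {g h : ι → k[X]} {u : k[X]ˣ}
    (hh : ∀ i, (h i).natDegree ≤ n) (hg : ∀ i, aevalHomogenize p q n (h i) = u * g i)
    {t : ι → Polynomial.degreeLT k (m + 1)} (ht : t ∈ syzygies h m) :
    (fun i => aevalHomogenize p q m (t i : k[X])) ⬝ᵥ g = 0 := by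
  have hdot := dotProduct_aevalHomogenize (x := p) (y := q)
    (fun i => mem_degreeLT_succ.mp (t i).2) hh
  have hgu : (fun i => aevalHomogenize p q n (h i)) = (u : k[X]) • g := funext hg
  rw [mem_syzygies.mp ht, map_zero, hgu, dotProduct_smul, smul_eq_mul] at hdot
  exact (mul_eq_zero_iff_left u.ne_zero).mp hdot

variable {M : Matrix (Fin 3) (Fin 2) k[X]} {c : ℕ} {i : Fin 3} {h : Fin 3 → k[X]} {u : k[X]ˣ}

theorem le_mul_natDegree_of_finrank_syzygies_pos (hM : ∀ i j, (M i j).natDegree ≤ c)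
    (hu : IsUnimodular (minors M)) (hi : (minors M i).coeff (2 * c) ≠ 0)
    (hqp : q.natDegree < p.natDegree) (hq : q ≠ 0) (hh : ∀ i, (h i).natDegree ≤ n)
    (hg : ∀ i, aevalHomogenize p q n (h i) = u * minors M i)
    (hpos : 0 < Module.finrank k (syzygies h m)) : c ≤ m * p.natDegree := by
  have : Nontrivial (syzygies h m) := Module.nontrivial_of_finrank_pos hpos
  obtain ⟨⟨t, ht⟩, ht0⟩ := exists_ne (0 : syzygies h m)
  refine le_of_dotProduct_minors_eq_zero hM hu hi (fun i => natDegree_aevalHomogenize_le hqp.le)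
    (dotProduct_eq_zero_of_mem_syzygies hh hg ht) fun h0 => ht0 (Subtype.ext ?_)
  exact injective_compLeft_aevalHomogenize _ hqp hq m (h0.trans (map_zero _).symm)

theorem eq_aevalHomogenize_of_two_le_finrank_syzygies (hM : ∀ i j, (M i j).natDegree ≤ c)
    (hu : IsUnimodular (minors M)) (hi : (minors M i).coeff (2 * c) ≠ 0)
    (hqp : q.natDegree < p.natDegree) (hq : q ≠ 0) (hh : ∀ i, (h i).natDegree ≤ n)
    (hg : ∀ i, aevalHomogenize p q n (h i) = u * minors M i) (hm : m * p.natDegree = c)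
    (htwo : 2 ≤ Module.finrank k (syzygies h m)) (i : Fin 3) (j : Fin 2) :
    ∃ P : k[X], P.natDegree ≤ m ∧ M i j = aevalHomogenize p q m P := by
  let Φ := (aevalHomogenize p q m ∘ₗ (Polynomial.degreeLT k (m + 1)).subtype).compLeft (Fin 3)
  have hle : (syzygies h m).map Φ ≤ Submodule.span k {M.col 0, M.col 1} := by
    rintro _ ⟨t, ht, rfl⟩
    exact mem_span_col_of_dotProduct_minors_eq_zero hM hu hi
      (fun i => (natDegree_aevalHomogenize_le hqp.le).trans_eq hm)
      (dotProduct_eq_zero_of_mem_syzygies hh hg ht)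
  have hmap : Module.finrank k ((syzygies h m).map Φ) = Module.finrank k (syzygies h m) :=
    ((syzygies h m).equivMapOfInjective Φ
      (injective_compLeft_aevalHomogenize _ hqp hq m)).finrank_eq.symm
  have hspan : Module.finrank k (Submodule.span k {M.col 0, M.col 1}) ≤ 2 := by
    classical
    rw [← Finset.coe_pair]
    exact (finrank_span_finset_le_card _).trans Finset.card_le_two
  have : FiniteDimensional k (Submodule.span k {M.col 0, M.col 1}) :=
    FiniteDimensional.span_of_finite k (Set.toFinite _)
  have heq := Submodule.eq_of_le_of_finrank_le hle (by omega)
  have hcol : M.col j ∈ (syzygies h m).map Φ := by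
    rw [heq]
    apply Submodule.subset_span
    fin_cases j <;> simp
  obtain ⟨t, -, ht⟩ := hcol
  exact ⟨t i, mem_degreeLT_succ.mp (t i).2, (congrFun ht i).symm⟩

theorem exists_eq_aevalHomogenize_of_minors_eq (hM : ∀ i j, (M i j).natDegree ≤ c)
    (hu : IsUnimodular (minors M)) (hi : (minors M i).coeff (2 * c) ≠ 0)
    (hqp : q.natDegree < p.natDegree) (hq : q ≠ 0) {i₀ : Fin 3} (hi₀ : h i₀ ≠ 0)
    (hh : ∀ i, (h i).natDegree ≤ (h i₀).natDegree)
    (hg : ∀ i, aevalHomogenize p q (h i₀).natDegree (h i) = u * minors M i) :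
    ∃ m, m * p.natDegree = c ∧
      ∀ i j, ∃ P : k[X], P.natDegree ≤ m ∧ M i j = aevalHomogenize p q m P := by
  obtain ⟨m, hm⟩ : ∃ m, m = (h i₀).natDegree / 2 := ⟨_, rfl⟩
  have hrank := card_mul_le_finrank_syzygies_add hh m
  rw [Fintype.card_fin] at hrank
  have hge : c ≤ m * p.natDegree :=
    le_mul_natDegree_of_finrank_syzygies_pos hM hu hi hqp hq hh hg (by omega)
  have hle : (h i₀).natDegree * p.natDegree ≤ 2 * c :=
    calc (h i₀).natDegree * p.natDegree
        = (u * minors M i₀).natDegree := by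
          rw [← hg, Polynomial.natDegree_eq_of_degree_eq_some
            (degree_aevalHomogenize_natDegree hqp hi₀)]
      _ ≤ 2 * c := Polynomial.natDegree_mul_le.trans (by
          rw [Polynomial.natDegree_coe_units, zero_add]
          exact natDegree_minors_le hM i₀)
  have hmul : 2 * m * p.natDegree ≤ (h i₀).natDegree * p.natDegree :=
    Nat.mul_le_mul_right _ (by omega)
  rw [mul_assoc] at hmul
  have hmc : m * p.natDegree = c := by omega
  have heven : (h i₀).natDegree ≤ 2 * m :=
    Nat.le_of_mul_le_mul_right (by rw [mul_assoc]; omega) (pos_of_gt hqp)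
  exact ⟨m, hmc, eq_aevalHomogenize_of_two_le_finrank_syzygies hM hu hi hqp hq hh hg hmc (by omega)⟩

theorem exists_ratioField_minors_eq_adjoin_and_eq_aevalHomogenize (hc : 0 < c)
    (hM : ∀ i j, (M i j).natDegree ≤ c) (hu : IsUnimodular (minors M))
    (hi : (minors M i).coeff (2 * c) ≠ 0) :
    ∃ f : RatFunc k, ratioField k (fun i => algebraMap k[X] (RatFunc k) (minors M i)) = k⟮f⟯ ∧
      f.denom.natDegree < f.num.natDegree ∧ ∃ m, m * f.num.natDegree = c ∧
        ∀ i j, ∃ P : k[X], P.natDegree ≤ m ∧ M i j = aevalHomogenize f.num f.denom m P := by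
  have hdeg := Polynomial.le_natDegree_of_ne_zero hi
  obtain ⟨f, hf, hlt⟩ :=
    exists_eq_adjoin_natDegree_denom_lt (ratioField_algebraMap_ne_bot hu (i₀ := i) (by omega))
  obtain ⟨h, i₀, u, hi₀, hh, hg⟩ :=
    exists_aevalHomogenize_eq_unit_mul hu (transcendental_of_natDegree_denom_lt hlt) hf.le
  exact ⟨f, hf, hlt,
    exists_eq_aevalHomogenize_of_minors_eq hM hu hi hlt f.denom_ne_zero hi₀ hh hg⟩

theorem natDegree_eq_one_of_natDegree_aevalHomogenize_eq_one (hqp : q.natDegree < p.natDegree)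
    (hq : q ≠ 0) {P : k[X]} (hPm : P.natDegree ≤ m) (hm : 1 < m)
    (hP : (aevalHomogenize p q m P).natDegree = 1) : p.natDegree = 1 := by
  have hP0 : P ≠ 0 := by
    rintro rfl
    simp at hP
  rw [Polynomial.natDegree_eq_of_degree_eq_some (degree_aevalHomogenize hqp hq hP0 hPm)] at hP
  rcases Nat.eq_zero_or_pos P.natDegree with h0 | h0
  · rw [h0, zero_mul, zero_add, Nat.sub_zero] at hP
    exact absurd (Nat.eq_one_of_mul_eq_one_right hP) hm.ne'
  · have := Nat.le_mul_of_pos_left p.natDegree h0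
    omega

theorem finrank_span_range_aevalHomogenize_le {ι : Type*} {v : ι → k[X]}
    (hv : ∀ i, ∃ P : k[X], P.natDegree ≤ m ∧ v i = aevalHomogenize p q m P) :
    Module.finrank k (Submodule.span k (Set.range v)) ≤ m + 1 := by
  have : Module.Finite k (Polynomial.degreeLT k (m + 1)) :=
    Module.Finite.equiv (Polynomial.degreeLTEquiv k (m + 1)).symm
  have hle : Submodule.span k (Set.range v) ≤
      (Polynomial.degreeLT k (m + 1)).map (aevalHomogenize p q m) := by
    rw [Submodule.span_le]
    rintro _ ⟨i, rfl⟩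
    obtain ⟨P, hP, hvi⟩ := hv i
    exact ⟨P, mem_degreeLT_succ.mpr hP, hvi.symm⟩
  exact (Submodule.finrank_mono hle).trans
    ((Submodule.finrank_map_le _ _).trans_eq (finrank_degreeLT k _))

theorem adjoin_simple_eq_top_of_natDegree_num_eq_one {f : RatFunc k}
    (hf : f.denom.natDegree < f.num.natDegree) (h1 : f.num.natDegree = 1) : k⟮f⟯ = ⊤ := by
  rw [← IntermediateField.finrank_eq_one_iff_eq_top, f.finrank_eq_max_natDegree,
    max_eq_left hf.le, h1]

theorem ratioField_minors_eq_top (hM : ∀ i j, (M i j).natDegree ≤ c)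
    (hu : IsUnimodular (minors M)) (hi : (minors M i).coeff (2 * c) ≠ 0)
    (hspan : 3 ≤ Module.finrank k
      (Submodule.span k (Set.range fun x : Fin 3 × Fin 2 => M x.1 x.2)))
    {x : Fin 3 × Fin 2} (hx : (M x.1 x.2).natDegree = 1) :
    ratioField k (fun i => algebraMap k[X] (RatFunc k) (minors M i)) = ⊤ := by
  have hc : 0 < c := (hx.symm.trans_le (hM _ _)).trans_lt' one_pos
  obtain ⟨f, hf, hlt, m, -, hP⟩ :=
    exists_ratioField_minors_eq_adjoin_and_eq_aevalHomogenize hc hM hu hi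
  have hm := hspan.trans (finrank_span_range_aevalHomogenize_le fun x => hP x.1 x.2)
  obtain ⟨P, hPm, hMP⟩ := hP x.1 x.2
  rw [hf, adjoin_simple_eq_top_of_natDegree_num_eq_one hlt]
  exact natDegree_eq_one_of_natDegree_aevalHomogenize_eq_one hlt f.denom_ne_zero hPm (by omega)
    (hMP ▸ hx)

end Composite

section Dehomogenize

variable {R : Type*} [CommRing R] {n : ℕ} {v : MvPolynomial (Fin 2) R}

/-- Dehomogenization of binary forms in the chart where the second coordinate is `1`. -/
noncomputable def dehomogenize : MvPolynomial (Fin 2) R →ₐ[R] R[X] :=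
  aeval ![Polynomial.X, 1]

theorem homogenize_dehomogenize (hv : v.IsHomogeneous n) : (dehomogenize v).homogenize n = v :=
  Polynomial.homogenize_eq_of_isHomogeneous hv rfl

theorem natDegree_dehomogenize_le (hv : v.IsHomogeneous n) : (dehomogenize v).natDegree ≤ n :=
  (aeval_natDegree_le _ hv.totalDegree_le _ fun i => by
    fin_cases i <;> simp [Polynomial.natDegree_X_le]).trans_eq (mul_one n)

theorem aevalHomogenize_dehomogenize {S : Type*} [CommRing S] [Algebra R S]
    (hv : v.IsHomogeneous n) (z : Fin 2 → S) :
    aevalHomogenize (z 0) (z 1) n (dehomogenize v) = aeval z v := by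
  have hz : ![z 0, z 1] = z := by
    ext i
    fin_cases i <;> rfl
  simp [aevalHomogenize, hz, homogenize_dehomogenize hv]

theorem X_one_dvd_of_coeff_dehomogenize_eq_zero (hv : v.IsHomogeneous n)
    (h : (dehomogenize v).coeff n = 0) : (X 1 : MvPolynomial (Fin 2) R) ∣ v := by
  have hX := aevalHomogenize_dehomogenize hv (X (R := R))
  rw [aeval_X_left_apply] at hX
  rw [← hX]
  cases n with
  | zero => simp [aevalHomogenize_apply, h]
  | succ n =>
    rw [aevalHomogenize_succ, h, map_zero, zero_mul, zero_add]
    exact dvd_mul_right _ _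

variable {k ι : Type*} [Field k] {g : ι → MvPolynomial (Fin 2) k}

theorem isUnimodular_dehomogenize [Fintype ι] (hg : ∀ i, (g i).IsHomogeneous n)
    (hunit : ∀ F, (∀ i, F ∣ g i) → IsUnit F) : IsUnimodular fun i => dehomogenize (g i) := by
  have hg0 : (fun i => dehomogenize (g i)) ≠ 0 := fun h => not_isUnit_zero <| hunit 0 fun i => by
    rw [← homogenize_dehomogenize (hg i), congrFun h i]
    simp
  obtain ⟨d, w, hw, hdw⟩ := exists_isUnimodular_eq_smul hg0
  have hd0 : d ≠ 0 := by
    rintro rfl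
    exact hg0 (by rw [hdw, zero_smul])
  have hdvd : ∀ i, d.homogenize d.natDegree ∣ g i := fun i => by
    rcases eq_or_ne (w i) 0 with h0 | h0
    · rw [← homogenize_dehomogenize (hg i), congrFun hdw i, Pi.smul_apply, h0]
      simp
    · have hdeg := natDegree_dehomogenize_le (hg i)
      rw [congrFun hdw i, Pi.smul_apply, smul_eq_mul, Polynomial.natDegree_mul hd0 h0] at hdeg
      obtain ⟨m, rfl⟩ := Nat.exists_eq_add_of_le (le_of_add_le_left hdeg)
      rw [← homogenize_dehomogenize (hg i), congrFun hdw i, Pi.smul_apply, smul_eq_mul,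
        Polynomial.homogenize_mul _ _ le_rfl (Nat.add_le_add_iff_left.mp hdeg)]
      exact dvd_mul_right _ _
  have hd : IsUnit d := by
    rw [← Polynomial.aeval_homogenize_X_one d le_rfl]
    exact (hunit _ hdvd).map (dehomogenize (R := k))
  obtain ⟨a, ha⟩ := hw
  obtain ⟨e, he⟩ := hd.exists_left_inv
  refine ⟨e • a, ?_⟩
  rw [hdw, smul_dotProduct, dotProduct_smul, ha, smul_eq_mul, smul_eq_mul, mul_one, he]

theorem exists_coeff_dehomogenize_ne_zero (hg : ∀ i, (g i).IsHomogeneous n)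
    (hunit : ∀ F, (∀ i, F ∣ g i) → IsUnit F) : ∃ i, (dehomogenize (g i)).coeff n ≠ 0 := by
  by_contra! h
  exact X_prime.not_isUnit <| hunit (X 1) fun i =>
    X_one_dvd_of_coeff_dehomogenize_eq_zero (hg i) (h i)

theorem finrank_span_le_finrank_span_dehomogenize [Finite ι] (hg : ∀ i, (g i).IsHomogeneous n) :
    Module.finrank k (Submodule.span k (Set.range g)) ≤
      Module.finrank k (Submodule.span k (Set.range fun i => dehomogenize (g i))) := by
  have hmap : Submodule.span k (Set.range g) =
      (Submodule.span k (Set.range fun i => dehomogenize (g i))).map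
        (Polynomial.homogenizeLM n) := by
    rw [Submodule.map_span, ← Set.range_comp]
    congr 2
    exact funext fun i => (homogenize_dehomogenize (hg i)).symm
  have := FiniteDimensional.span_of_finite k
    (Set.finite_range fun i => dehomogenize (g i))
  rw [hmap]
  exact Submodule.finrank_map_le _ _

end Dehomogenize

section Height

variable {R : Type*} [CommRing R]

theorem isUnit_of_le_span_singleton [IsNoetherianRing R] {I : Ideal R} (hI : 1 < idealHeight I)
    {F : R} (hF : I ≤ Ideal.span {F}) : IsUnit F := by
  by_contra hunit
  obtain ⟨P, hP⟩ := Ideal.nonempty_minimalPrimes (I := Ideal.span {F})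
    (by rwa [Ne, Ideal.span_singleton_eq_top])
  have : P.IsPrime := hP.1.1
  have hheight : Order.height (⟨P, this⟩ : PrimeSpectrum R) ≤ 1 := by
    rw [← PrimeSpectrum.height_eq_orderHeight]
    exact Ideal.height_le_one_of_isPrincipal_of_mem_minimalPrimes _ P hP
  have hle : idealHeight I ≤ Order.height (⟨P, this⟩ : PrimeSpectrum R) :=
    iInf₂_le (⟨P, this⟩ : PrimeSpectrum R) (hF.trans hP.1.2)
  exact hI.not_ge (hle.trans hheight)

theorem dvd_mul_sub_mul_of_forall_dvd_minors {M : Matrix (Fin 3) (Fin 2) R} {F : R}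
    (hF : ∀ i, F ∣ minors M i) (i j : Fin 3) : F ∣ M i 0 * M j 1 - M j 0 * M i 1 := by
  have h₀ : F ∣ M 1 0 * M 2 1 - M 2 0 * M 1 1 := hF 0
  have h₁ : F ∣ M 2 0 * M 0 1 - M 0 0 * M 2 1 := hF 1
  have h₂ : F ∣ M 0 0 * M 1 1 - M 1 0 * M 0 1 := hF 2
  match i, j with
  | 0, 0 | 1, 1 | 2, 2 => simp only [sub_self, dvd_zero]
  | 1, 2 => exact h₀
  | 2, 1 => exact dvd_sub_comm.mp h₀
  | 2, 0 => exact h₁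
  | 0, 2 => exact dvd_sub_comm.mp h₁
  | 0, 1 => exact h₂
  | 1, 0 => exact dvd_sub_comm.mp h₂

theorem isUnit_of_forall_dvd_minors [IsNoetherianRing R] {M : Matrix (Fin 3) (Fin 2) R}
    (hM : 1 < idealHeight (Ideal.span {x | ∃ i j, x = M i 0 * M j 1 - M j 0 * M i 1})) {F : R}
    (hF : ∀ i, F ∣ minors M i) : IsUnit F := by
  refine isUnit_of_le_span_singleton hM (Ideal.span_le.mpr ?_)
  rintro _ ⟨i, j, rfl⟩
  exact Ideal.mem_span_singleton.mpr (dvd_mul_sub_mul_of_forall_dvd_minors hF i j)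

end Height

section FunctionField

variable {ι k L : Type*} [Field k] [Field L] [Algebra k L]

theorem ratioField_mul_left {a : L} (ha : a ≠ 0) (v : ι → L) :
    ratioField k (fun i => a * v i) = ratioField k v := by
  simp only [ratioField, mul_div_mul_left _ _ ha]

theorem map_ratioField {L' : Type*} [Field L'] [Algebra k L'] (σ : L →ₐ[k] L') (v : ι → L) :
    (ratioField k v).map σ = ratioField k (fun i => σ (v i)) := by
  simp only [ratioField, IntermediateField.adjoin_map, ← Set.range_comp, Function.comp_def,
    map_div₀]

theorem ratioField_le_adjoin_range (v : ι → L) :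
    ratioField k v ≤ IntermediateField.adjoin k (Set.range v) := by
  have hv : ∀ i, v i ∈ IntermediateField.adjoin k (Set.range v) := fun i =>
    IntermediateField.subset_adjoin _ _ ⟨i, rfl⟩
  refine IntermediateField.adjoin_le_iff.mpr ?_
  rintro _ ⟨p, rfl⟩
  exact div_mem (hv p.1) (hv p.2)

theorem exists_mul_eq_of_mem_adjoin_image {A : Type*} [CommRing A] [Algebra k A] {ψ : A →ₐ[k] L}
    (hψ : Function.Injective ψ) {S : Set A} {v : A}
    (hv : ψ v ∈ IntermediateField.adjoin k (ψ '' S)) :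
    ∃ a ∈ Algebra.adjoin k S, ∃ b ∈ Algebra.adjoin k S, b ≠ 0 ∧ b * v = a := by
  obtain ⟨a', ha', b', hb', hab⟩ := IntermediateField.mem_adjoin_iff_div.mp hv
  rw [← AlgHom.map_adjoin] at ha' hb'
  obtain ⟨a, ha, rfl⟩ := ha'
  obtain ⟨b, hb, rfl⟩ := hb'
  have hab' : ψ v = ψ a / ψ b := hab
  rcases eq_or_ne b 0 with rfl | hb0
  · have : Nontrivial A := RingHom.domain_nontrivial (ψ : A →+* L)
    refine ⟨0, zero_mem _, 1, one_mem _, one_ne_zero, hψ ?_⟩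
    rw [one_mul, hab', map_zero, div_zero]
  · refine ⟨a, ha, b, hb, hb0, hψ ?_⟩
    rw [map_mul, hab', mul_div_cancel₀ _ ((map_ne_zero_iff ψ hψ).mpr hb0)]

variable {z : Fin 2 → L} {n : ℕ}

theorem aeval_eq_pow_mul_aeval_dehomogenize {v : MvPolynomial (Fin 2) k} (hv : v.IsHomogeneous n)
    (hz : z 1 ≠ 0) :
    aeval z v = z 1 ^ n * Polynomial.aeval (z 0 / z 1) (dehomogenize v) := by
  rw [← aevalHomogenize_dehomogenize hv,
    aevalHomogenize_eq_pow_mul_aeval_div hz (natDegree_dehomogenize_le hv)]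

theorem transcendental_div_of_algebraicIndependent (hz : AlgebraicIndependent k z) :
    Transcendental k (z 0 / z 1) := by
  rw [transcendental_iff]
  intro P hP
  have hhom := Polynomial.isHomogeneous_homogenize (n := P.natDegree) P
  have hdeh : dehomogenize (P.homogenize P.natDegree) = P :=
    Polynomial.aeval_homogenize_X_one P le_rfl
  have h0 := aeval_eq_pow_mul_aeval_dehomogenize hhom (hz.ne_zero 1)
  rw [hdeh, hP, mul_zero] at h0
  exact Polynomial.eq_zero_of_homogenize_eq_zero le_rfl (hz.eq_zero_of_aeval_eq_zero _ h0)

theorem div_aeval_mem_ratioField (hz : AlgebraicIndependent k z) {g : ι → MvPolynomial (Fin 2) k}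
    (hg : ∀ i, (g i).IsHomogeneous n)
    (htop : ratioField k (fun i => algebraMap k[X] (RatFunc k) (dehomogenize (g i))) = ⊤)
    {v w : MvPolynomial (Fin 2) k} (hv : v.IsHomogeneous n) (hw : w.IsHomogeneous n) :
    aeval z v / aeval z w ∈ ratioField k (fun i => aeval z (g i)) := by
  have hz1 : z 1 ≠ 0 := hz.ne_zero 1
  have ht := transcendental_div_of_algebraicIndependent hz
  let σ : RatFunc k →ₐ[k] L :=
    k⟮z 0 / z 1⟯.val.comp (RatFunc.algEquivOfTranscendental (z 0 / z 1) ht).toAlgHom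
  have hσ : ∀ {u : MvPolynomial (Fin 2) k}, u.IsHomogeneous n →
      aeval z u = z 1 ^ n * σ (algebraMap k[X] (RatFunc k) (dehomogenize u)) := fun {u} hu => by
    rw [aeval_eq_pow_mul_aeval_dehomogenize hu hz1]
    simp [σ]
  have hfield : ratioField k (fun i => aeval z (g i)) = (⊤ : IntermediateField k _).map σ := by
    simp only [hσ (hg _), ratioField_mul_left (pow_ne_zero n hz1), ← map_ratioField, htop]
  rw [hfield, hσ hv, hσ hw, mul_div_mul_left _ _ (pow_ne_zero n hz1), ← map_div₀]
  exact ⟨_, trivial, rfl⟩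

theorem exists_mul_eq_of_ratioField_dehomogenize_eq_top {g : ι → MvPolynomial (Fin 2) k}
    (hg : ∀ i, (g i).IsHomogeneous n) {i₀ : ι} (hi₀ : g i₀ ≠ 0)
    (htop : ratioField k (fun i => algebraMap k[X] (RatFunc k) (dehomogenize (g i))) = ⊤)
    {v : MvPolynomial (Fin 2) k}
    (hv : v ∈ Algebra.adjoin k {f : MvPolynomial (Fin 2) k | f.IsHomogeneous n}) :
    ∃ a ∈ Algebra.adjoin k (Set.range g), ∃ b ∈ Algebra.adjoin k (Set.range g),
      b ≠ 0 ∧ b * v = a := by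
  let K := FractionRing (MvPolynomial (Fin 2) k)
  let z : Fin 2 → K := fun i => algebraMap (MvPolynomial (Fin 2) k) K (X i)
  have hz : AlgebraicIndependent k z :=
    (algebraicIndependent_X (Fin 2) k).map' (f := IsScalarTower.toAlgHom k _ K)
      (IsFractionRing.injective (MvPolynomial (Fin 2) k) K)
  let F := IntermediateField.adjoin k (aeval z '' Set.range g)
  have hgF : ∀ i, aeval z (g i) ∈ F := fun i =>
    IntermediateField.subset_adjoin _ _ ⟨g i, ⟨i, rfl⟩, rfl⟩
  have hratio : ratioField k (fun i => aeval z (g i)) ≤ F := by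
    simp only [F, ← Set.range_comp]
    exact ratioField_le_adjoin_range _
  have hform : ∀ f : MvPolynomial (Fin 2) k, f.IsHomogeneous n → aeval z f ∈ F := fun f hf => by
    have hne : aeval z (g i₀) ≠ 0 := (map_ne_zero_iff (aeval (R := k) z) hz).mpr hi₀
    rw [← div_mul_cancel₀ (aeval z f) hne]
    exact mul_mem (hratio (div_aeval_mem_ratioField hz hg htop hf (hg i₀))) (hgF i₀)
  exact exists_mul_eq_of_mem_adjoin_image hz
    ((Algebra.adjoin_le hform : _ ≤ F.toSubalgebra.comap (aeval z)) hv)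

end FunctionField

section Birationality

theorem natDegree_dehomogenize_X_one_pow_mul_linear {R : Type*} [CommRing R] {α : R} (hα : α ≠ 0)
    (β : R) (n : ℕ) : (dehomogenize (X 1 ^ n * (C α * X 0 + C β * X 1))).natDegree = 1 := by
  simpa [dehomogenize] using Polynomial.natDegree_linear (b := β) hα

theorem isHomogeneous_minors {R σ : Type*} [CommRing R] {c : ℕ}
    {M : Matrix (Fin 3) (Fin 2) (MvPolynomial σ R)} (hM : ∀ i j, (M i j).IsHomogeneous c)
    (i : Fin 3) : (minors M i).IsHomogeneous (2 * c) := by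
  have hmul : ∀ i j, (M i 0 * M j 1).IsHomogeneous (2 * c) := fun i j =>
    two_mul c ▸ (hM i 0).mul (hM j 1)
  fin_cases i <;> exact (hmul _ _).sub (hmul _ _)

theorem stmt19_general {k : Type*} [Field k] {c : ℕ}
    {φ : Matrix (Fin 3) (Fin 2) (MvPolynomial (Fin 2) k)}
    (hhom : ∀ i j, (φ i j).IsHomogeneous c)
    (hht : 2 ≤ idealHeight (Ideal.span
      {x : MvPolynomial (Fin 2) k | ∃ i₁ i₂ : Fin 3, x =
        φ i₁ 0 * φ i₂ 1 - φ i₂ 0 * φ i₁ 1}))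
    (hmu : 3 ≤ Module.finrank k
      (Submodule.span k (Set.range fun p : Fin 3 × Fin 2 => φ p.1 p.2)))
    {α β : k} (hα : α ≠ 0)
    (hy : ∃ p : Fin 3 × Fin 2, φ p.1 p.2 = X 1 ^ (c - 1) * (C α * X 0 + C β * X 1))
    {v : MvPolynomial (Fin 2) k}
    (hv : v ∈ Algebra.adjoin k {f : MvPolynomial (Fin 2) k | f.IsHomogeneous (2 * c)}) :
    ∃ a ∈ Algebra.adjoin k (Set.range (minors φ)), ∃ b ∈ Algebra.adjoin k (Set.range (minors φ)),
      b ≠ 0 ∧ b * v = a := by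
  have hg := isHomogeneous_minors hhom
  have hunit : ∀ F, (∀ i, F ∣ minors φ i) → IsUnit F := fun F =>
    isUnit_of_forall_dvd_minors (hht.trans_lt' (by norm_num))
  obtain ⟨i, hi⟩ := exists_coeff_dehomogenize_ne_zero hg hunit
  have hi₀ : minors φ i ≠ 0 := fun h => hi (by simp [h])
  have hM : ∀ i, minors (φ.map dehomogenize) i = dehomogenize (minors φ i) :=
    minors_map (dehomogenize (R := k)).toRingHom φ
  obtain ⟨p, hp⟩ := hy
  have htop := ratioField_minors_eq_top (M := φ.map dehomogenize)
    (fun i j => natDegree_dehomogenize_le (hhom i j))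
    (funext hM ▸ isUnimodular_dehomogenize hg hunit) (hM i ▸ hi)
    (hmu.trans (finrank_span_le_finrank_span_dehomogenize fun p => hhom p.1 p.2))
    (hp ▸ natDegree_dehomogenize_X_one_pow_mul_linear hα β (c - 1))
  simp only [hM] at htop
  exact exists_mul_eq_of_ratioField_dehomogenize_eq_top hg hi₀ htop hv

end Birationality

/-- Let `k` be an infinite field, `d = 2c`, and `φ` a `3 × 2` matrix of forms of degree `c` in
`B = k[x,y]` with `ht I₂(φ) = 2` and `μ(I₁(φ)) ≥ 3` (the entries span a `k`-space of dimension
at least `3`).  If two of the entries of `φ` are `x^c` and `y^{c-1}(x+y)`, then the morphism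
`ℙ¹ → ℙ²` given by the signed `2 × 2` minors `g₁, g₂, g₃` of `φ` is birational onto its image;
equivalently (as in the paper), the subrings `k[g₁,g₂,g₃] ⊆ k[B_d]` of `B` have the same
quotient field, i.e. every element of the `d`-th Veronese subring `k[B_d]` is a fraction of
elements of `k[g₁,g₂,g₃]`. -/
theorem stmt19 {k : Type*} [Field k] [Infinite k] (c : ℕ) (hc : 0 < c) (d : ℕ) (hd : d = 2 * c)
    (φ : Matrix (Fin 3) (Fin 2) (MvPolynomial (Fin 2) k))
    (hhom : ∀ i j, (φ i j).IsHomogeneous c)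
    (hht : idealHeight (Ideal.span
      {x : MvPolynomial (Fin 2) k | ∃ i₁ i₂ : Fin 3, x =
        φ i₁ 0 * φ i₂ 1 - φ i₂ 0 * φ i₁ 1}) = 2)
    (hmu : 3 ≤ Module.finrank k
      (Submodule.span k (Set.range fun p : Fin 3 × Fin 2 => φ p.1 p.2)))
    (hx : ∃ p : Fin 3 × Fin 2, φ p.1 p.2 = (X 0 : MvPolynomial (Fin 2) k) ^ c)
    (hy : ∃ p : Fin 3 × Fin 2, φ p.1 p.2 = (X 1 : MvPolynomial (Fin 2) k) ^ (c - 1) * (X 0 + X 1))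
    (hxy : ∀ p q : Fin 3 × Fin 2,
      φ p.1 p.2 = (X 0 : MvPolynomial (Fin 2) k) ^ c →
      φ q.1 q.2 = (X 1 : MvPolynomial (Fin 2) k) ^ (c - 1) * (X 0 + X 1) → p ≠ q) :
    let g : Fin 3 → MvPolynomial (Fin 2) k :=
      ![φ 1 0 * φ 2 1 - φ 2 0 * φ 1 1,
        -(φ 0 0 * φ 2 1 - φ 2 0 * φ 0 1),
        φ 0 0 * φ 1 1 - φ 1 0 * φ 0 1]
    ∀ v ∈ Algebra.adjoin k {f : MvPolynomial (Fin 2) k | f.IsHomogeneous d},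
      ∃ a ∈ Algebra.adjoin k (Set.range g), ∃ b ∈ Algebra.adjoin k (Set.range g),
        b ≠ 0 ∧ b * v = a := by
  subst hd
  intro g v hv
  have hg : minors φ = g := by
    simp only [g, neg_sub]
    rfl
  rw [← hg]
  exact stmt19_general hhom hht.ge hmu (one_ne_zero' k) (β := 1) (by simpa using hy) hv
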